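/- (a) If the predistance polynomials p_1, …, p_{d−1} are all monic (that is, ω_i^i = 1 for i = 1, …, d−1), then Γ is distance-regular. (b) If Γ is bipartite and all the predistance polynomials p_1, …, p_d are monic, then Γ is distance-regular. -/

import Mathlib

/-!
Let `A` be the adjacency matrix. For `d = 1` the diameter is at most one and the graph is complete.
For `d ≥ 2`, monicity of `p₁` forces `p₁ = X`, so that the average degree equals `λ₀` and the graph
is regular (`regular_of_predistance_one`).

The heart of the proof is `aeval_predistance_eq`: by induction on `i < d`, `pᵢ(A)` is the
distance-`i` matrix. The normalization `⟨pᵢ, pᵢ⟩ = pᵢ(λ₀)` says, in a regular graph, that the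
entries of `pᵢ(A)` and their squares have the same sum. By orthogonality to the distance-`j`
matrices with `j < i`, the entries at distance less than `i` contribute nothing to the first sum.
As `pᵢ` is monic, the entries at distance `i` count shortest walks, so they are at least one. Both
kinds of contribution to the difference of the sums are nonnegative, hence zero, which leaves
entries `0` below distance `i` and `1` at distance `i`.

The Hoffman polynomial (`exists_hoffman`) makes the all-ones matrix a polynomial in `A` of degree
`d`; together with the diameter bound `dist_le_of_charpoly` this supplies the remaining
distance-`d` matrix. The polynomials in `A` therefore coincide with the span of the distance
matrices, which is closed under multiplication, and this is distance-regularity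
(`isDistanceRegular_of_top`). The bipartite claim has stronger hypotheses than the first one.
-/

open Polynomial Finset

/-- The scalar product `⟨f,g⟩_Γ = (1/n)·Σ_{i=0}^d m_i f(λ_i) g(λ_i)`. -/
noncomputable def ip (n d : ℕ) (m : ℕ → ℕ) (lam : ℕ → ℝ) (f g : Polynomial ℝ) : ℝ :=
  (n : ℝ)⁻¹ * ∑ i ∈ Finset.range (d + 1), (m i : ℝ) * f.eval (lam i) * g.eval (lam i)

/-- The preintersection numbers `ξ_{ij}^h = ⟨p_i p_j, p_h⟩ / ⟨p_h, p_h⟩`. -/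
noncomputable def xi (n d : ℕ) (m : ℕ → ℕ) (lam : ℕ → ℝ) (p : ℕ → Polynomial ℝ)
    (i j h : ℕ) : ℝ :=
  ip n d m lam (p i * p j) (p h) / ip n d m lam (p h) (p h)

/-- `α_i = ξ_{1,i}^i`. -/
noncomputable def alph (n d : ℕ) (m : ℕ → ℕ) (lam : ℕ → ℝ) (p : ℕ → Polynomial ℝ)
    (i : ℕ) : ℝ :=
  xi n d m lam p 1 i i

/-- `β_i = ξ_{1,i+1}^i` for `i < d`, with the convention `β_d = 0`. -/
noncomputable def bet (n d : ℕ) (m : ℕ → ℕ) (lam : ℕ → ℝ) (p : ℕ → Polynomial ℝ)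
    (i : ℕ) : ℝ :=
  if i < d then xi n d m lam p 1 (i + 1) i else 0

/-- `γ_i = ξ_{1,i-1}^i` for `1 ≤ i`, with the convention `γ_0 = 0`. -/
noncomputable def gam (n d : ℕ) (m : ℕ → ℕ) (lam : ℕ → ℝ) (p : ℕ → Polynomial ℝ)
    (i : ℕ) : ℝ :=
  if 1 ≤ i then xi n d m lam p 1 (i - 1) i else 0

/-- A graph is distance-regular if for all `h i j` and all pairs of vertices `u, v` at
distance `h`, the number of vertices at distance `i` from `u` and `j` from `v` depends
only on `h, i, j`. -/
def IsDistanceRegular {V : Type} (G : SimpleGraph V) : Prop :=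
  ∀ h i j : ℕ, ∃ c : ℕ, ∀ u v : V, G.dist u v = h →
    ({w : V | G.dist u w = i ∧ G.dist v w = j}).ncard = c

/-! ### Polynomials in a real symmetric matrix -/

section Spectral

open Matrix

variable {V : Type} [Fintype V] [DecidableEq V]

/-- The two expressions for the scalar product agree: `tr f(A) = Σ mᵢ f(λᵢ)`. Diagonalise `A`; its
eigenvalues with multiplicity are the roots of its characteristic polynomial. -/
theorem trace_aeval_of_charpoly {A : Matrix V V ℝ} (hA : A.IsHermitian) {d : ℕ} {m : ℕ → ℕ}
    {lam : ℕ → ℝ}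
    (hchar : A.charpoly = ∏ i ∈ Finset.range (d + 1), (X - C (lam i)) ^ m i) (f : ℝ[X]) :
    (aeval A f).trace = ∑ i ∈ Finset.range (d + 1), (m i : ℝ) * f.eval (lam i) := by
  have h1 : (aeval A f).trace = ∑ v, f.eval (hA.eigenvalues v) := by
    conv_lhs => rw [hA.spectral_theorem]
    rw [Polynomial.aeval_algHom_apply, Unitary.conjStarAlgAut_apply, Matrix.trace_mul_cycle,
      Unitary.coe_star_mul_self, one_mul]
    have hd : aeval (diagonal (RCLike.ofReal ∘ hA.eigenvalues) : Matrix V V ℝ) f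
        = diagonal (fun v => f.eval (hA.eigenvalues v)) := by
      have := Polynomial.aeval_algHom_apply (Matrix.diagonalAlgHom (n := V) (α := ℝ) ℝ)
        hA.eigenvalues f
      simp only [Matrix.diagonalAlgHom_apply] at this
      refine Eq.trans this (congrArg _ ?_)
      ext v
      simp [Polynomial.aeval_def]
    rw [hd, Matrix.trace_diagonal]
  have h2 : (A.charpoly.roots.map f.eval).sum
      = ∑ i ∈ Finset.range (d + 1), (m i : ℝ) * f.eval (lam i) := by
    rw [hchar, Polynomial.roots_prod]
    · simp only [roots_pow, roots_X_sub_C, Multiset.map_bind, Multiset.sum_bind,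
        Multiset.map_nsmul, Multiset.map_singleton, Multiset.sum_nsmul, Multiset.sum_singleton,
        nsmul_eq_mul]
      rfl
    · exact Finset.prod_ne_zero_iff.2 fun i _ => pow_ne_zero _ (X_sub_C_ne_zero _)
  rw [h1, ← h2, hA.roots_charpoly_eq_eigenvalues]
  simp

theorem isSymm_aeval {A : Matrix V V ℝ} (hA : A.IsSymm) (f : ℝ[X]) : (aeval A f).IsSymm := by
  induction f using Polynomial.induction_on' with
  | add p q hp hq => rw [map_add]; exact hp.add hq
  | monomial k a =>
    rw [aeval_monomial, ← Algebra.smul_def]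
    exact (hA.pow k).smul a

theorem sum_entries_mul {A : Matrix V V ℝ} (hA : A.IsSymm) (f g : ℝ[X]) :
    ∑ u, ∑ v, aeval A f u v * aeval A g u v = (aeval A (f * g)).trace := by
  rw [map_mul, Matrix.trace]
  simp only [Matrix.diag_apply, Matrix.mul_apply]
  refine Finset.sum_congr rfl fun u _ => Finset.sum_congr rfl fun v _ => ?_
  rw [(isSymm_aeval hA g).apply]

theorem aeval_mulVec_of_eigen {A : Matrix V V ℝ} {x : V → ℝ} {c : ℝ} (h : A *ᵥ x = c • x)
    (f : ℝ[X]) : aeval A f *ᵥ x = f.eval c • x := by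
  induction f using Polynomial.induction_on' with
  | add p q hp hq => rw [map_add, Matrix.add_mulVec, hp, hq, eval_add, add_smul]
  | monomial k a =>
    have hk : A ^ k *ᵥ x = c ^ k • x := by
      induction k with
      | zero => simp
      | succ k ih => rw [pow_succ, ← Matrix.mulVec_mulVec, h, Matrix.mulVec_smul, ih, smul_smul,
                      pow_succ, mul_comm]
    rw [aeval_monomial, ← Algebra.smul_def, Matrix.smul_mulVec, hk, eval_monomial, smul_smul]

/-- A symmetric matrix is annihilated by every polynomial vanishing on its spectrum: the squares of
the entries of `f(A)` add up to `tr f(A)² = 0`. -/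
theorem aeval_eq_zero_of_eval {A : Matrix V V ℝ} (hA : A.IsHermitian) {d : ℕ} {m : ℕ → ℕ}
    {lam : ℕ → ℝ}
    (hchar : A.charpoly = ∏ i ∈ Finset.range (d + 1), (X - C (lam i)) ^ m i) {f : ℝ[X]}
    (hf : ∀ i ≤ d, f.eval (lam i) = 0) : aeval A f = 0 := by
  have hs : A.IsSymm := by simpa using hA
  have h := sum_entries_mul hs f f
  rw [trace_aeval_of_charpoly hA hchar, Finset.sum_eq_zero (s := Finset.range (d + 1))] at h
  · ext u v
    have h1 := (Finset.sum_eq_zero_iff_of_nonneg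
      (fun u _ => Finset.sum_nonneg fun v _ => mul_self_nonneg _)).1 h u (Finset.mem_univ _)
    have h2 := (Finset.sum_eq_zero_iff_of_nonneg
      (fun v _ => mul_self_nonneg _)).1 h1 v (Finset.mem_univ _)
    simpa using h2
  · intro i hi
    rw [eval_mul, hf i (by simpa [Nat.lt_succ_iff] using hi)]; simp

/-- `λ₀ I - A` is positive semidefinite, as `λ₀` is the largest eigenvalue of `A`. -/
theorem posSemidef_sub {A : Matrix V V ℝ} (hA : A.IsHermitian) {d : ℕ} {m : ℕ → ℕ}
    {lam : ℕ → ℝ}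
    (hchar : A.charpoly = ∏ i ∈ Finset.range (d + 1), (X - C (lam i)) ^ m i)
    (hlam : ∀ i j : ℕ, i < j → j ≤ d → lam j < lam i) :
    (lam 0 • (1 : Matrix V V ℝ) - A).PosSemidef := by
  have hB : (lam 0 • (1 : Matrix V V ℝ) - A).IsHermitian := by
    rw [Matrix.IsHermitian, conjTranspose_sub, hA.eq]; simp
  rw [hB.posSemidef_iff_eigenvalues_nonneg]
  intro v
  have h := hB.eigenvalues_mem_spectrum_real v
  set μ := hB.eigenvalues v
  have h' : lam 0 - μ ∈ spectrum ℝ A := by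
    rw [spectrum.mem_iff] at h ⊢
    rw [← IsUnit.neg_iff]
    convert h using 2
    simp only [Algebra.algebraMap_eq_smul_one, sub_smul]
    abel
  rw [Matrix.mem_spectrum_iff_isRoot_charpoly, hchar, IsRoot, eval_prod,
    Finset.prod_eq_zero_iff] at h'
  obtain ⟨i, hi, h0⟩ := h'
  simp only [eval_pow, eval_sub, eval_X, eval_C] at h0
  have h0 := eq_zero_of_pow_eq_zero h0
  have : lam i ≤ lam 0 := by
    rcases Nat.eq_zero_or_pos i with rfl | hpos
    · exact le_rfl
    · exact (hlam 0 i hpos (by simpa [Nat.lt_succ_iff] using hi)).le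
  simp only [Pi.zero_apply]
  linarith

end Spectral

/-! ### Polynomials in the adjacency matrix -/

section Graph

open Matrix

variable {V : Type} [Fintype V] [DecidableEq V] {G : SimpleGraph V} [DecidableRel G.Adj]

theorem pow_adjMatrix_entry_of_lt {k : ℕ} {u v : V} (h : k < G.dist u v) :
    (G.adjMatrix ℝ ^ k) u v = 0 := by
  rw [SimpleGraph.adjMatrix_pow_apply_eq_card_walk, Nat.cast_eq_zero, Fintype.card_eq_zero_iff]
  refine ⟨fun w => ?_⟩
  have h1 := SimpleGraph.dist_le w.1
  have h2 : w.1.length = k := w.2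
  omega

theorem one_le_pow_adjMatrix_entry (hconn : G.Connected) (u v : V) :
    1 ≤ (G.adjMatrix ℝ ^ G.dist u v) u v := by
  rw [SimpleGraph.adjMatrix_pow_apply_eq_card_walk]
  obtain ⟨w, hw⟩ := hconn.exists_walk_length_eq_dist u v
  have : 0 < Fintype.card {p : G.Walk u v | p.length = G.dist u v} :=
    Fintype.card_pos_iff.2 ⟨⟨w, hw⟩⟩
  exact_mod_cast this

/-- If `deg f ≤ k`, then at distance at least `k` only the term of degree `k` contributes to the
entries of `f(A)`. -/
theorem aeval_adjMatrix_entry (f : ℝ[X]) {k : ℕ} (hf : f.natDegree ≤ k) {u v : V}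
    (h : k ≤ G.dist u v) :
    aeval (G.adjMatrix ℝ) f u v = f.coeff k * (G.adjMatrix ℝ ^ k) u v := by
  rw [aeval_eq_sum_range' (Nat.lt_succ_of_le hf), Matrix.sum_apply, Finset.sum_range_succ,
    Finset.sum_eq_zero]
  · simp
  · intro i hi
    rw [Matrix.smul_apply, pow_adjMatrix_entry_of_lt (by have := Finset.mem_range.1 hi; omega)]
    simp


theorem sum_entries_eq_ip [Nonempty V] {n d : ℕ} (hn : Fintype.card V = n) {lam : ℕ → ℝ}
    {m : ℕ → ℕ}
    (hchar : (G.adjMatrix ℝ).charpoly = ∏ i ∈ Finset.range (d + 1), (X - C (lam i)) ^ m i)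
    (f g : ℝ[X]) :
    ∑ u, ∑ v, aeval (G.adjMatrix ℝ) f u v * aeval (G.adjMatrix ℝ) g u v
      = n * ip n d m lam f g := by
  have hn0 : (n : ℝ) ≠ 0 := by rw [← hn]; exact_mod_cast Fintype.card_ne_zero
  have hA : (G.adjMatrix ℝ).IsHermitian := by simp [Matrix.IsHermitian]
  rw [sum_entries_mul G.isSymm_adjMatrix, trace_aeval_of_charpoly hA hchar, ip,
    mul_inv_cancel_left₀ hn0]
  simp only [eval_mul, mul_assoc]

theorem natDegree_prod_linear (lam : ℕ → ℝ) (k : ℕ) :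
    (∏ i ∈ Finset.range k, (X - C (lam i))).natDegree = k := by
  rw [natDegree_prod_of_monic _ _ fun i _ => monic_X_sub_C _]
  simp

/-- Reduction modulo `∏ (X - λᵢ)`: every polynomial in `A` is one of degree at most `d`. -/
theorem exists_natDegree_le_aeval_eq {d : ℕ} {lam : ℕ → ℝ} {m : ℕ → ℕ}
    (hchar : (G.adjMatrix ℝ).charpoly = ∏ i ∈ Finset.range (d + 1), (X - C (lam i)) ^ m i)
    (f : ℝ[X]) :
    ∃ g : ℝ[X], g.natDegree ≤ d ∧ aeval (G.adjMatrix ℝ) f = aeval (G.adjMatrix ℝ) g := by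
  have hA : (G.adjMatrix ℝ).IsHermitian := by simp [Matrix.IsHermitian]
  set r : ℝ[X] := ∏ i ∈ Finset.range (d + 1), (X - C (lam i)) with hr
  have hmon : r.Monic := monic_prod_of_monic _ _ fun i _ => monic_X_sub_C _
  have hdeg : r.natDegree = d + 1 := natDegree_prod_linear lam (d + 1)
  refine ⟨f %ₘ r, ?_, ?_⟩
  · have := natDegree_modByMonic_lt f hmon (by intro h; rw [h] at hdeg; simp at hdeg)
    omega
  · have h0 : aeval (G.adjMatrix ℝ) r = 0 := by
      refine aeval_eq_zero_of_eval hA hchar fun i hi => ?_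
      rw [hr, eval_prod]
      exact Finset.prod_eq_zero (Finset.mem_range.2 (Nat.lt_succ_of_le hi)) (by simp)
    conv_lhs => rw [← modByMonic_add_div f r]
    rw [map_add, map_mul, h0, zero_mul, add_zero]

/-- The diameter is at most `d`: otherwise `A ^ dist u v`, being a polynomial in `A` of degree at
most `d`, would have a zero entry at `(u, v)`. -/
theorem dist_le_of_charpoly (hconn : G.Connected) {d : ℕ} {lam : ℕ → ℝ} {m : ℕ → ℕ}
    (hchar : (G.adjMatrix ℝ).charpoly = ∏ i ∈ Finset.range (d + 1), (X - C (lam i)) ^ m i)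
    (u v : V) : G.dist u v ≤ d := by
  by_contra! h
  obtain ⟨g, hg, hgA⟩ := exists_natDegree_le_aeval_eq hchar (X ^ G.dist u v)
  have h1 := one_le_pow_adjMatrix_entry hconn u v
  have h2 : (G.adjMatrix ℝ ^ G.dist u v) u v = 0 := by
    have := congrFun (congrFun hgA u) v
    rw [map_pow, aeval_X] at this
    rw [this, aeval_adjMatrix_entry g (hg.trans h.le) le_rfl,
      coeff_eq_zero_of_natDegree_lt (lt_of_le_of_lt hg h), zero_mul]
  linarith

/-- Hoffman polynomial: in a connected regular graph `∏_{i ≥ 1} (A - λᵢ)` is a nonzero multiple of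
the all-ones matrix. -/
theorem exists_hoffman (hconn : G.Connected) {d : ℕ} {lam : ℕ → ℝ} {m : ℕ → ℕ}
    (hchar : (G.adjMatrix ℝ).charpoly = ∏ i ∈ Finset.range (d + 1), (X - C (lam i)) ^ m i)
    (hlam : ∀ i j : ℕ, i < j → j ≤ d → lam j < lam i)
    (hreg : G.adjMatrix ℝ *ᵥ 1 = lam 0 • 1) :
    ∃ q : ℝ[X], q.Monic ∧ q.natDegree = d ∧ ∃ c : ℝ, c ≠ 0 ∧
      ∀ u v, aeval (G.adjMatrix ℝ) q u v = c := by
  have hA : (G.adjMatrix ℝ).IsHermitian := by simp [Matrix.IsHermitian]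
  obtain ⟨w⟩ := hconn.nonempty
  set A := G.adjMatrix ℝ with hAdef
  set q : ℝ[X] := ∏ i ∈ Finset.range d, (X - C (lam (i + 1))) with hq
  have hdegv : ∀ v, (G.degree v : ℝ) = lam 0 := by
    intro v
    have h1 : (A *ᵥ 1) v = lam 0 := by simpa using congrFun hreg v
    rw [hAdef, SimpleGraph.adjMatrix_mulVec_apply] at h1
    simpa using h1
  have h0 : aeval A ((X - C (lam 0)) * q) = 0 := by
    refine aeval_eq_zero_of_eval hA hchar fun i hi => ?_
    rw [eval_mul, hq, eval_prod]
    rcases i with _ | i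
    · simp
    · rw [Finset.prod_eq_zero (Finset.mem_range.2 hi) (by simp), mul_zero]
  have hAq : A * aeval A q = lam 0 • aeval A q := by
    rw [map_mul, map_sub, aeval_X, aeval_C, Algebra.algebraMap_eq_smul_one, sub_mul,
      smul_mul_assoc, one_mul, sub_eq_zero] at h0
    exact h0
  -- The graph is `λ₀`-regular, so each column of `q(A)` lies in the kernel of the Laplacian, and
  -- it is constant by connectedness.
  have hcol : ∀ u u' v, aeval A q u v = aeval A q u' v := by
    intro u u' v
    have hker : G.lapMatrix ℝ *ᵥ (fun x => aeval A q x v) = 0 := by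
      ext x
      have h1 := congrFun (congrFun hAq x) v
      rw [SimpleGraph.adjMatrix_mul_apply, Matrix.smul_apply, smul_eq_mul] at h1
      rw [SimpleGraph.lapMatrix_mulVec_apply, hdegv, h1, sub_self, Pi.zero_apply]
    exact (G.lapMatrix_mulVec_eq_zero_iff_forall_reachable.1 hker) u u' (hconn u u')
  have hconst : ∀ u v, aeval A q u v = aeval A q w w := by
    intro u v
    rw [hcol u w v, ← (isSymm_aeval G.isSymm_adjMatrix q).apply, hcol v w w]
  refine ⟨q, monic_prod_of_monic _ _ fun i _ => monic_X_sub_C _,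
    natDegree_prod_linear (fun i => lam (i + 1)) d, aeval A q w w, fun hc => ?_, hconst⟩
  have h1 := congrFun (aeval_mulVec_of_eigen hreg q) w
  have h2 : q.eval (lam 0) = 0 := by
    simpa [Matrix.mulVec, dotProduct, hconst, hc] using h1.symm
  rw [hq, eval_prod, Finset.prod_eq_zero_iff] at h2
  obtain ⟨i, hi, h2⟩ := h2
  have := hlam 0 (i + 1) (Nat.succ_pos i) (Finset.mem_range.1 hi)
  simp only [eval_sub, eval_X, eval_C] at h2
  linarith

/-- If the average degree `tr A² / |V|` equals `λ₀`, then the all-ones vector attains the maximum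
of the Rayleigh quotient, so it is an eigenvector and the graph is regular. -/
theorem regular_of_trace {d : ℕ} {lam : ℕ → ℝ} {m : ℕ → ℕ}
    (hchar : (G.adjMatrix ℝ).charpoly = ∏ i ∈ Finset.range (d + 1), (X - C (lam i)) ^ m i)
    (hlam : ∀ i j : ℕ, i < j → j ≤ d → lam j < lam i)
    (h : ∑ u, ∑ v, G.adjMatrix ℝ u v * G.adjMatrix ℝ u v = Fintype.card V * lam 0) :
    G.adjMatrix ℝ *ᵥ 1 = lam 0 • 1 := by
  have hA : (G.adjMatrix ℝ).IsHermitian := by simp [Matrix.IsHermitian]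
  have hps := posSemidef_sub hA hchar hlam
  have hsq : ∀ u v, G.adjMatrix ℝ u v * G.adjMatrix ℝ u v = G.adjMatrix ℝ u v := by
    intro u v
    by_cases huv : G.Adj u v <;> simp [SimpleGraph.adjMatrix_apply, huv]
  simp only [hsq] at h
  have h0 := (hps.dotProduct_mulVec_zero_iff 1).1 (by
    rw [Matrix.sub_mulVec, Matrix.smul_mulVec, Matrix.one_mulVec]
    simp only [dotProduct, Pi.star_apply, Pi.one_apply, Pi.sub_apply, Pi.smul_apply, mulVec,
      star_one, one_mul, mul_one, smul_eq_mul, Finset.sum_sub_distrib, Finset.sum_const,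
      Finset.card_univ, nsmul_eq_mul, h, sub_self])
  rw [Matrix.sub_mulVec, Matrix.smul_mulVec, Matrix.one_mulVec, sub_eq_zero] at h0
  exact h0.symm

end Graph

/-! ### Distance matrices as predistance polynomials of `A` -/

section Main

open Matrix

variable {V : Type} [Fintype V] [DecidableEq V] {G : SimpleGraph V} [DecidableRel G.Adj]

theorem predistance_zero [Nonempty V] {n d : ℕ} (hn : Fintype.card V = n) {lam : ℕ → ℝ}
    {m : ℕ → ℕ}
    (hchar : (G.adjMatrix ℝ).charpoly = ∏ i ∈ Finset.range (d + 1), (X - C (lam i)) ^ m i)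
    {f : ℝ[X]} (hdeg : f.degree = (0 : ℕ)) (hnorm : ip n d m lam f f = f.eval (lam 0)) :
    f = 1 := by
  have hn0 : (n : ℝ) ≠ 0 := by rw [← hn]; exact_mod_cast Fintype.card_ne_zero
  obtain ⟨c, hc⟩ : ∃ c, f = C c := ⟨_, eq_C_of_degree_le_zero hdeg.le⟩
  have hc0 : c ≠ 0 := by
    rintro rfl
    simp [hc] at hdeg
  have h := sum_entries_eq_ip hn hchar f f
  rw [sum_entries_mul G.isSymm_adjMatrix, hnorm, hc, ← C_mul, aeval_C,
    Algebra.algebraMap_eq_smul_one, trace_smul, trace_one, hn, eval_C, smul_eq_mul] at h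
  have hc1 : c = 1 := by
    have h2 : (c * n) * (c - 1) = 0 := by linear_combination h
    rcases mul_eq_zero.1 h2 with h3 | h3
    · exact absurd h3 (mul_ne_zero hc0 hn0)
    · linarith
  rw [hc, hc1, C_1]

/-- A monic `p₁` is `X`, by orthogonality to `p₀ = 1` and `tr A = 0`; its normalization then says
that the average degree is `λ₀`. -/
theorem regular_of_predistance_one [Nonempty V] {n d : ℕ} (hn : Fintype.card V = n)
    {lam : ℕ → ℝ} {m : ℕ → ℕ}
    (hchar : (G.adjMatrix ℝ).charpoly = ∏ i ∈ Finset.range (d + 1), (X - C (lam i)) ^ m i)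
    (hlam : ∀ i j : ℕ, i < j → j ≤ d → lam j < lam i)
    {f : ℝ[X]} (hdeg : f.degree = (1 : ℕ)) (hmonic : f.coeff 1 = 1)
    (horth : ip n d m lam f 1 = 0) (hnorm : ip n d m lam f f = f.eval (lam 0)) :
    G.adjMatrix ℝ *ᵥ 1 = lam 0 • 1 := by
  have hn0 : (n : ℝ) ≠ 0 := by rw [← hn]; exact_mod_cast Fintype.card_ne_zero
  have hf : f = X + C (f.coeff 0) := by
    have := eq_X_add_C_of_degree_le_one hdeg.le
    rwa [hmonic, C_1, one_mul] at this
  have h0 := sum_entries_eq_ip hn hchar f 1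
  rw [sum_entries_mul G.isSymm_adjMatrix, horth, mul_one, mul_zero, hf, map_add, aeval_X, aeval_C,
    trace_add, SimpleGraph.trace_adjMatrix, Algebra.algebraMap_eq_smul_one, trace_smul, trace_one,
    hn, zero_add, smul_eq_mul] at h0
  have hX : f = X := by
    rw [hf, (mul_eq_zero.1 h0).resolve_right hn0]; simp
  have h1 := sum_entries_eq_ip hn hchar f f
  rw [hnorm, hX, aeval_X, eval_X, ← hn] at h1
  exact regular_of_trace hchar hlam h1

/-- `pᵢ(A)` is the distance-`i` matrix for `i < d`. Write `P = pᵢ(A)`. Since the graph is regular,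
the normalization of `pᵢ` reads `Σ P² = Σ P` over all entries. Given the claim below `i`,
orthogonality removes from `Σ P` the entries at distance less than `i`. What remains is a
vanishing sum of the nonnegative terms `P²` at distance less than `i`, and `P² - P` at distance
`i`, where `P ≥ 1` because `pᵢ` is monic. -/
theorem aeval_predistance_eq (hconn : G.Connected) {n d : ℕ} (hn : Fintype.card V = n)
    {lam : ℕ → ℝ} {m : ℕ → ℕ}
    (hchar : (G.adjMatrix ℝ).charpoly = ∏ i ∈ Finset.range (d + 1), (X - C (lam i)) ^ m i)
    (hreg : G.adjMatrix ℝ *ᵥ 1 = lam 0 • 1) {p : ℕ → ℝ[X]}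
    (hdeg : ∀ i ≤ d, (p i).degree = (i : ℕ))
    (horth : ∀ i ≤ d, ∀ j ≤ d, i ≠ j → ip n d m lam (p i) (p j) = 0)
    (hnorm : ∀ i ≤ d, ip n d m lam (p i) (p i) = (p i).eval (lam 0))
    (hmonic : ∀ i < d, (p i).coeff i = 1) (i : ℕ) (hi : i < d) (u v : V) :
    aeval (G.adjMatrix ℝ) (p i) u v = if G.dist u v = i then 1 else 0 := by
  have := hconn.nonempty
  induction i using Nat.strong_induction_on generalizing u v with
  | _ i ih =>
  set P := aeval (G.adjMatrix ℝ) (p i) with hP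
  have hnat : (p i).natDegree ≤ i := natDegree_le_of_degree_le (hdeg i hi.le).le
  have hfar : ∀ u v, i < G.dist u v → P u v = 0 := by
    intro u v h
    rw [hP, aeval_adjMatrix_entry (p i) hnat h.le, pow_adjMatrix_entry_of_lt h, mul_zero]
  have hone : ∀ u v, G.dist u v = i → 1 ≤ P u v := by
    intro u v h
    rw [hP, aeval_adjMatrix_entry (p i) hnat h.ge, hmonic i hi, one_mul, ← h]
    exact one_le_pow_adjMatrix_entry hconn u v
  have hsq : ∑ u, ∑ v, P u v * P u v = n * (p i).eval (lam 0) := by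
    rw [hP, sum_entries_eq_ip hn hchar, hnorm i hi.le]
  have hsum : ∑ u, ∑ v, P u v = n * (p i).eval (lam 0) := by
    have h := aeval_mulVec_of_eigen hreg (p i)
    have h2 : ∀ u, ∑ v, P u v = (p i).eval (lam 0) := by
      intro u
      simpa [Matrix.mulVec, dotProduct] using congrFun h u
    simp [h2, hn]
  have hlow : ∑ u, ∑ v, (if G.dist u v < i then P u v else 0) = 0 := by
    have h1 : ∀ u v, (if G.dist u v < i then P u v else 0)
        = ∑ j ∈ Finset.range i, P u v * aeval (G.adjMatrix ℝ) (p j) u v := by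
      intro u v
      rw [Finset.sum_congr rfl fun j hj => by
        rw [ih j (Finset.mem_range.1 hj) ((Finset.mem_range.1 hj).trans hi)]]
      simp
    simp only [h1]
    rw [Finset.sum_congr rfl fun u _ => Finset.sum_comm, Finset.sum_comm]
    refine Finset.sum_eq_zero fun j hj => ?_
    have hj := Finset.mem_range.1 hj
    rw [hP, sum_entries_eq_ip hn hchar, horth i hi.le j (hj.trans hi).le hj.ne', mul_zero]
  have hnonneg : ∀ u v, 0 ≤ P u v * P u v - P u v + (if G.dist u v < i then P u v else 0) := by
    intro u v
    rcases lt_trichotomy (G.dist u v) i with h | h | h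
    · rw [if_pos h]; nlinarith [mul_self_nonneg (P u v)]
    · rw [if_neg h.not_lt]; nlinarith [hone u v h]
    · rw [hfar u v h]; simp
  have htot : ∑ u, ∑ v, (P u v * P u v - P u v + (if G.dist u v < i then P u v else 0)) = 0 := by
    simp only [Finset.sum_add_distrib, Finset.sum_sub_distrib]
    rw [hsq, hsum, hlow]; ring
  have h1 := (Finset.sum_eq_zero_iff_of_nonneg
    (fun u _ => Finset.sum_nonneg fun v _ => hnonneg u v)).1 htot u (Finset.mem_univ _)
  have h2 := (Finset.sum_eq_zero_iff_of_nonneg (fun v _ => hnonneg u v)).1 h1 v (Finset.mem_univ _)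
  rcases lt_trichotomy (G.dist u v) i with h | h | h
  · rw [if_pos h] at h2
    rw [if_neg h.ne]
    exact mul_self_eq_zero.1 (by linarith)
  · rw [if_neg h.not_lt] at h2
    rw [if_pos h]
    have := hone u v h
    nlinarith
  · rw [if_neg h.ne', hfar u v h]

/-- If every polynomial in `A` depends on the distance only, and every distance matrix is a
polynomial in `A`, then a product of two distance matrices depends on the distance only; its
entries are the counts in the definition of distance-regularity. -/
theorem isDistanceRegular_of_algebra
    (hS : ∀ f : ℝ[X], ∃ c : ℕ → ℝ, ∀ u v, aeval (G.adjMatrix ℝ) f u v = c (G.dist u v))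
    (hD : ∀ i : ℕ, ∃ f : ℝ[X], ∀ u v,
      aeval (G.adjMatrix ℝ) f u v = if G.dist u v = i then 1 else 0) :
    IsDistanceRegular G := by
  intro h i j
  obtain ⟨f, hf⟩ := hD i
  obtain ⟨g, hg⟩ := hD j
  obtain ⟨c, hc⟩ := hS (f * g)
  have key : ∀ u v, (({w : V | G.dist u w = i ∧ G.dist v w = j}).ncard : ℝ) = c (G.dist u v) := by
    intro u v
    have hset : {w : V | G.dist u w = i ∧ G.dist v w = j}
        = ((Finset.univ.filter fun w => G.dist u w = i ∧ G.dist v w = j : Finset V) : Set V) := by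
      ext w; simp
    rw [hset, Set.ncard_coe_finset, ← hc u v, map_mul, Matrix.mul_apply, Finset.card_filter,
      Nat.cast_sum]
    refine Finset.sum_congr rfl fun w _ => ?_
    rw [hf, hg, G.dist_comm (u := w)]
    by_cases h1 : G.dist u w = i <;> by_cases h2 : G.dist v w = j <;> simp [h1, h2]
  by_cases hex : ∃ u v, G.dist u v = h
  · obtain ⟨u, v, huv⟩ := hex
    refine ⟨({w : V | G.dist u w = i ∧ G.dist v w = j}).ncard, fun u' v' huv' => ?_⟩
    have := (key u' v').trans ((congrArg c (huv'.trans huv.symm)).trans (key u v).symm)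
    exact_mod_cast this
  · exact ⟨0, fun u v huv => absurd ⟨u, v, huv⟩ hex⟩

/-- The monic polynomials `p₀, …, p_{k-1}` span all polynomials of degree less than `k`, so each
of these gives a combination of distance matrices. -/
theorem aeval_mem_of_lt {d : ℕ} {p : ℕ → ℝ[X]}
    (hdeg : ∀ i < d, (p i).degree = (i : ℕ)) (hmonic : ∀ i < d, (p i).coeff i = 1)
    (hp : ∀ i < d, ∀ u v, aeval (G.adjMatrix ℝ) (p i) u v = if G.dist u v = i then 1 else 0)
    (k : ℕ) (hk : k ≤ d) (f : ℝ[X]) (hf : f.degree < k) :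
    ∃ c : ℕ → ℝ, ∀ u v, aeval (G.adjMatrix ℝ) f u v = c (G.dist u v) := by
  induction k generalizing f with
  | zero =>
    have : f = 0 := by simpa using hf
    exact ⟨0, by simp [this]⟩
  | succ k ih =>
    have hlt : (f - C (f.coeff k) * p k).degree < k := by
      rw [degree_lt_iff_coeff_zero]
      intro j hj
      rcases hj.eq_or_lt with rfl | hj
      · simp [hmonic k hk]
      · rw [coeff_sub, coeff_C_mul, coeff_eq_zero_of_degree_lt (hf.trans_le (by exact_mod_cast hj)),
          coeff_eq_zero_of_degree_lt (p := p k) (by rw [hdeg k hk]; exact_mod_cast hj)]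
        simp
    obtain ⟨c, hc⟩ := ih (by omega) _ hlt
    refine ⟨fun h => c h + f.coeff k * if h = k then 1 else 0, fun u v => ?_⟩
    beta_reduce
    rw [← hc, ← hp k hk, map_sub, map_mul, aeval_C, Algebra.algebraMap_eq_smul_one]
    simp

/-- Once `pᵢ(A)` is the distance-`i` matrix for `i < d`, a single monic `q` of degree `d` with
`q(A)` constant at each distance, and nonzero at distance `d`, suffices for distance-regularity. -/
theorem isDistanceRegular_of_top (hconn : G.Connected) {d : ℕ} {lam : ℕ → ℝ} {m : ℕ → ℕ}
    (hchar : (G.adjMatrix ℝ).charpoly = ∏ i ∈ Finset.range (d + 1), (X - C (lam i)) ^ m i)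
    {p : ℕ → ℝ[X]}
    (hdeg : ∀ i < d, (p i).degree = (i : ℕ)) (hmonic : ∀ i < d, (p i).coeff i = 1)
    (hp : ∀ i < d, ∀ u v, aeval (G.adjMatrix ℝ) (p i) u v = if G.dist u v = i then 1 else 0)
    {q : ℝ[X]} (hq : q.Monic) (hqd : q.natDegree = d) {c : ℕ → ℝ}
    (hqc : ∀ u v, aeval (G.adjMatrix ℝ) q u v = c (G.dist u v)) (hcd : c d ≠ 0) :
    IsDistanceRegular G := by
  have hdist := dist_le_of_charpoly hconn hchar
  refine isDistanceRegular_of_algebra (fun f => ?_) fun i => ?_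
  · obtain ⟨g, hg, hfg⟩ := exists_natDegree_le_aeval_eq hchar f
    have hlt : (g - C (g.coeff d) * q).degree < d := by
      rw [degree_lt_iff_coeff_zero]
      intro j hj
      rcases hj.eq_or_lt with rfl | hj
      · have : q.coeff d = 1 := by rw [← hqd]; exact hq
        simp [this]
      · rw [coeff_sub, coeff_C_mul, coeff_eq_zero_of_natDegree_lt (p := g) (by omega),
          coeff_eq_zero_of_natDegree_lt (p := q) (by omega)]
        simp
    obtain ⟨b, hb⟩ := aeval_mem_of_lt hdeg hmonic hp d le_rfl _ hlt
    refine ⟨fun h => b h + g.coeff d * c h, fun u v => ?_⟩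
    beta_reduce
    rw [hfg, ← hb, ← hqc, map_sub, map_mul, aeval_C, Algebra.algebraMap_eq_smul_one]
    simp
  · rcases lt_trichotomy i d with h | h | h
    · exact ⟨p i, hp i h⟩
    · -- subtract from `q(A)` its part at distances below `d`, then rescale
      refine ⟨C (c d)⁻¹ * (q - ∑ j ∈ Finset.range d, C (c j) * p j), fun u v => ?_⟩
      have hsum : (∑ j ∈ Finset.range d, aeval (G.adjMatrix ℝ) (C (c j) * p j)) u v
          = if G.dist u v < d then c (G.dist u v) else 0 := by
        rw [Matrix.sum_apply, Finset.sum_congr rfl fun j hj => by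
          rw [map_mul, aeval_C, Algebra.algebraMap_eq_smul_one, smul_mul_assoc, one_mul,
            Matrix.smul_apply, hp j (Finset.mem_range.1 hj)]]
        simp
      rw [map_mul, aeval_C, Algebra.algebraMap_eq_smul_one, smul_mul_assoc, one_mul,
        Matrix.smul_apply, map_sub, map_sum, Matrix.sub_apply, hsum, hqc, h]
      rcases (hdist u v).eq_or_lt with h1 | h1
      · simp [h1, hcd]
      · simp [h1, h1.ne]
    · refine ⟨0, fun u v => ?_⟩
      rw [if_neg ((hdist u v).trans_lt h).ne]
      simp

end Main

theorem stmt_19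
    (V : Type) [Fintype V] [DecidableEq V] (G : SimpleGraph V) [DecidableRel G.Adj]
    (hconn : G.Connected) (n d : ℕ) (hn : Fintype.card V = n)
    (lam : ℕ → ℝ) (m : ℕ → ℕ)
    (hchar : (G.adjMatrix ℝ).charpoly =
      ∏ i ∈ Finset.range (d + 1), (Polynomial.X - Polynomial.C (lam i)) ^ m i)
    (hlam : ∀ i j : ℕ, i < j → j ≤ d → lam j < lam i)
    (hm0 : m 0 = 1) (hmpos : ∀ i ≤ d, 0 < m i)
    (p : ℕ → Polynomial ℝ)
    (hdeg : ∀ i ≤ d, (p i).degree = (i : ℕ))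
    (horth : ∀ i ≤ d, ∀ j ≤ d, i ≠ j → ip n d m lam (p i) (p j) = 0)
    (hnorm : ∀ i ≤ d, ip n d m lam (p i) (p i) = (p i).eval (lam 0))
    (hd : 1 ≤ d) :
    ((∀ i, 1 ≤ i → i + 1 ≤ d → (p i).coeff i = 1) → IsDistanceRegular G) ∧
    (G.Colorable 2 → (∀ i, 1 ≤ i → i ≤ d → (p i).coeff i = 1) →
      IsDistanceRegular G) := by
  have := hconn.nonempty
  have hp0 : p 0 = 1 := predistance_zero hn hchar (hdeg 0 (Nat.zero_le d)) (hnorm 0 (Nat.zero_le d))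
  have main : (∀ i, 1 ≤ i → i + 1 ≤ d → (p i).coeff i = 1) → IsDistanceRegular G := by
    intro hmon
    have hmonic : ∀ i < d, (p i).coeff i = 1 := by
      intro i hi
      rcases Nat.eq_zero_or_pos i with rfl | hpos
      · simp [hp0]
      · exact hmon i hpos hi
    rcases hd.eq_or_lt with rfl | hd2
    · -- for `d = 1` the matrices `p 0 (A) = 1` and `A` are already the distance matrices
      refine isDistanceRegular_of_top hconn hchar (fun i hi => hdeg i hi.le) hmonic ?_
        (q := X) monic_X natDegree_X (c := fun h => if h = 1 then 1 else 0) ?_ (by simp)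
      · intro i hi u v
        obtain rfl : i = 0 := by omega
        rw [hp0, map_one, Matrix.one_apply]
        simp [hconn.dist_eq_zero_iff]
      · intro u v
        simp [SimpleGraph.adjMatrix_apply, SimpleGraph.dist_eq_one_iff_adj]
    · have hreg := regular_of_predistance_one hn hchar hlam (hdeg 1 hd) (hmonic 1 hd2)
        (hp0 ▸ horth 1 hd 0 (Nat.zero_le d) one_ne_zero) (hnorm 1 hd)
      obtain ⟨q, hq, hqd, c, hc, hqc⟩ := exists_hoffman hconn hchar hlam hreg
      exact isDistanceRegular_of_top hconn hchar (fun i hi => hdeg i hi.le) hmonic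
        (aeval_predistance_eq hconn hn hchar hreg hdeg horth hnorm hmonic) hq hqd
        (c := fun _ => c) hqc hc
  exact ⟨main, fun _ h => main fun i h1 h2 => h i h1 (by omega)⟩
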